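/- Let n ≥ 1 and let F, G be coprime completely reducible homogeneous polynomials of the same degree d ≥ 1 in R = MvPolynomial (Fin (n+1)) ℂ such that the generic fiber of the pencil 𝒫 generated by F and G is irreducible. If there exist more than 3 pairwise distinct completely reducible members of 𝒫, then the set of all linear factors of F together with all linear factors of G spans a subspace of dimension at most 3 of the (n+1)-dimensional space of homogeneous degree-1 polynomials (equivalently, 𝒫 is a linear pull-back of a pencil on ℙ²). -/

import Mathlib

open MvPolynomial

noncomputable section

/-- A linear form: a nonzero homogeneous polynomial of degree 1. -/
def IsLinearForm (n : ℕ) (α : MvPolynomial (Fin (n + 1)) ℂ) : Prop :=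
  α ≠ 0 ∧ α.IsHomogeneous 1

/-- A completely reducible polynomial: a product of linear forms. -/
def CompletelyReducible (n : ℕ) (P : MvPolynomial (Fin (n + 1)) ℂ) : Prop :=
  ∃ s : Multiset (MvPolynomial (Fin (n + 1)) ℂ),
    (∀ α ∈ s, IsLinearForm n α) ∧ P = s.prod

/-- F and G have no common non-unit factor. -/
def RelPrime (n : ℕ) (F G : MvPolynomial (Fin (n + 1)) ℂ) : Prop :=
  ∀ p : MvPolynomial (Fin (n + 1)) ℂ, p ∣ F → p ∣ G → IsUnit p

/-- The generic fiber of the pencil generated by F and G is irreducible. -/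
def GenericFiberIrreducible (n : ℕ) (F G : MvPolynomial (Fin (n + 1)) ℂ) : Prop :=
  {c : ℂ | ¬ Irreducible (F + C c * G)}.Finite

/-
Let `F`, `G` and two further members of the pencil split into linear forms. Up to sign, the Hessian
of `log (F / G)` is `∑ ± aᵢ aᵢᵀ / aᵢ(x)²`, summed over the linear factors of `F` (sign `+`) and of
`G` (sign `-`). Compress it to a 4-dimensional space containing the point `x` itself. Since each
summand has rank one, the determinant of the compression has poles of low order along `F` and `G`;
by Euler's identity it changes only by a scalar function when `F` and `G` are replaced by the other
two members, so it is also highly divisible along those, and comparing degrees it vanishes.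

Let the 4-dimensional space degenerate along a flag `0 ⊂ W₁ ⊂ W₂ ⊂ W₃` of spaces of linear forms,
each of which acquires a new factor of `F`. If no factor of `G` lay in `W₃`, the leading coefficient
would be a product of nonzero signed counts of factors, so `W₃` contains a factor of `G`. Hence some
`W` of dimension at most 2 contains a factor of `F` and none of `G`, while adjoining any other
factor of `F` brings in one of `G`. A space that contains factors of both `F` and `G` contains
equally many of each, as one sees by restricting to lines on which a factor vanishes. Counting
factors over the spaces in which `W` has codimension 1 then shows that all of them lie in one.
-/

namespace PencilOfForms

open Matrix

section Determinants

variable {R κ τ : Type*} [CommRing R] [Fintype κ] [DecidableEq κ] [Fintype τ] [DecidableEq τ]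

lemma det_smul_add_vecMulVec_col (s t : R) (M : Matrix τ τ R) {k : τ} {w : τ → R}
    (hw : w k = 0) :
    (s • M + t • vecMulVec (M.col k) w).det = s ^ Fintype.card τ * M.det := by
  have factored : s • M + t • vecMulVec (M.col k) w =
      M * (scalar τ s - vecMulVec (Pi.single k (-t)) w) := by
    rw [mul_sub, mul_vecMulVec, mulVec_single, op_smul_eq_smul, neg_smul, neg_vecMulVec,
      sub_neg_eq_add, smul_vecMulVec, scalar_apply, ← smul_one_eq_diagonal,
      Matrix.mul_smul, Matrix.mul_one]
  rw [factored, det_mul, ← eval_charpoly, charpoly_vecMulVec, mul_comm]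
  simp [hw]

lemma det_pow_card_pred_dvd_det_mul_adjugate_mul [IsDomain R] {A : Matrix κ κ R} (hA : A.det ≠ 0)
    (B : Matrix κ τ R) (D : Matrix τ κ R) :
    A.det ^ (Fintype.card τ - 1) ∣ (D * A.adjugate * B).det := by
  rcases isEmpty_or_nonempty τ with hτ | hτ
  · simp
  have eliminated : fromBlocks A B (-D) 0 * fromBlocks 1 (-(A.adjugate * B)) 0 (A.det • 1) =
      fromBlocks A 0 (-D) (D * A.adjugate * B) := by
    simp [fromBlocks_multiply, ← Matrix.mul_assoc, mul_adjugate]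
  have hdet := congrArg det eliminated
  rw [det_mul, det_fromBlocks_zero₂₁, det_fromBlocks_zero₁₂, det_one, one_mul, det_smul, det_one,
    mul_one, ← Nat.sub_add_cancel (Fintype.card_pos (α := τ)), pow_succ', mul_left_comm] at hdet
  exact ⟨_, (mul_left_cancel₀ hA hdet).symm.trans (mul_comm _ _)⟩

lemma isHomogeneous_det {σ : Type*} {M : Matrix τ τ (MvPolynomial σ R)} {r s : τ → ℕ}
    (hM : ∀ i j, (M i j).IsHomogeneous (r i + s j)) :
    M.det.IsHomogeneous (∑ i, r i + ∑ j, s j) := by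
  rw [det_apply]
  refine IsHomogeneous.sum _ _ _ fun π _ => ?_
  have hprod := IsHomogeneous.prod Finset.univ (fun i => M (π i) i) _ fun i _ => hM (π i) i
  rw [Finset.sum_add_distrib, Equiv.sum_comp π r] at hprod
  exact Submodule.smul_of_tower_mem (homogeneousSubmodule σ R _) _ hprod

end Determinants

section ClearedGram

variable {R S κ τ τ' : Type*} [CommRing R] [CommRing S] [Fintype κ] [DecidableEq κ]

/-- The weighted Gram matrix `∑ i, ε i • (B i / l i) (B i / l i)ᵀ` of the rows `B i`, cleared of
denominators through multiplication by `(∏ i, l i) ^ 2`. -/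
def clearedGram (ε l : κ → R) (B : Matrix κ τ R) : Matrix τ τ R :=
  Bᵀ * diagonal (fun i => ε i * (∏ j ∈ Finset.univ.erase i, l j) ^ 2) * B

lemma clearedGram_apply (ε l : κ → R) (B : Matrix κ τ R) (p q : τ) :
    clearedGram ε l B p q =
      ∑ i, ε i * (∏ j ∈ Finset.univ.erase i, l j) ^ 2 * B i p * B i q := by
  rw [clearedGram, mul_apply]
  simp only [mul_diagonal, transpose_apply]
  exact Finset.sum_congr rfl fun i _ => by ring

lemma clearedGram_map (φ : R →+* S) (ε l : κ → R) (B : Matrix κ τ R) :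
    (clearedGram ε l B).map φ = clearedGram (φ ∘ ε) (φ ∘ l) (B.map φ) := by
  ext p q
  simp [clearedGram_apply]

lemma clearedGram_mulVec_one_map [Fintype τ] (φ : R →+* S) (ε : κ → R) (B : Matrix κ τ R) :
    (clearedGram ε (B *ᵥ 1) B).map φ = clearedGram (φ ∘ ε) (B.map φ *ᵥ 1) (B.map φ) := by
  have hl : φ ∘ (B *ᵥ 1) = B.map φ *ᵥ 1 := by
    ext i
    simp [RingHom.map_mulVec]
  rw [clearedGram_map, hl]

lemma clearedGram_mul [Fintype τ] (ε l : κ → R) (B : Matrix κ τ R) (T : Matrix τ τ' R) :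
    clearedGram ε l (B * T) = Tᵀ * clearedGram ε l B * T := by
  simp only [clearedGram, transpose_mul, Matrix.mul_assoc]

lemma clearedGram_smul (ε l s : κ → R) (B : Matrix κ τ R) :
    clearedGram ε (s * l) (diagonal s * B) = (∏ i, s i) ^ 2 • clearedGram ε l B := by
  ext p q
  simp only [clearedGram_apply, Matrix.smul_apply, smul_eq_mul, Finset.mul_sum, diagonal_mul,
    Pi.mul_apply, Finset.prod_mul_distrib]
  refine Finset.sum_congr rfl fun i hi => ?_
  rw [← Finset.mul_prod_erase _ s hi]
  ring

lemma clearedGram_single [DecidableEq τ] (ε l : κ → R) (g : κ → τ) :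
    clearedGram ε l (of fun i => Pi.single (g i) (l i)) =
      (∏ i, l i) ^ 2 • diagonal fun p => ∑ i with g i = p, ε i := by
  ext p q
  simp only [clearedGram_apply, of_apply, Matrix.smul_apply, smul_eq_mul, diagonal_apply, mul_ite,
    mul_zero, Finset.sum_filter, Finset.mul_sum]
  split_ifs with hpq
  · subst hpq
    refine Finset.sum_congr rfl fun i hi => ?_
    rcases eq_or_ne (g i) p with rfl | hg
    · rw [← Finset.mul_prod_erase _ l hi, if_pos rfl, Pi.single_eq_same]
      ring
    · simp [hg]
  · refine Finset.sum_eq_zero fun i _ => ?_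
    rcases eq_or_ne (g i) p with rfl | hg
    · simp [Pi.single_eq_of_ne' hpq]
    · simp [Pi.single_eq_of_ne' hg]

lemma clearedGram_neg (ε l : κ → R) (B : Matrix κ τ R) :
    clearedGram (-ε) l B = -clearedGram ε l B := by
  ext p q
  simp [clearedGram_apply]

lemma clearedGram_sumElim {κ' : Type*} [Fintype κ'] [DecidableEq κ'] (ε l : κ → R)
    (B : Matrix κ τ R) (ε' l' : κ' → R) (B' : Matrix κ' τ R) :
    clearedGram (Sum.elim ε ε') (Sum.elim l l') (fromRows B B') =
      (∏ i, l' i) ^ 2 • clearedGram ε l B + (∏ i, l i) ^ 2 • clearedGram ε' l' B' := by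
  have erase_inl (i : κ) : (Finset.univ : Finset (κ ⊕ κ')).erase (Sum.inl i) =
      (Finset.univ.erase i).disjSum Finset.univ := by
    ext (j | j) <;> simp
  have erase_inr (i : κ') : (Finset.univ : Finset (κ ⊕ κ')).erase (Sum.inr i) =
      Finset.univ.disjSum (Finset.univ.erase i) := by
    ext (j | j) <;> simp
  ext p q
  simp only [clearedGram_apply, Fintype.sum_sum_type, erase_inl, erase_inr, Finset.prod_disjSum,
    Matrix.add_apply, Matrix.smul_apply, smul_eq_mul, Finset.mul_sum, fromRows_apply_inl,
    fromRows_apply_inr, Sum.elim_inl, Sum.elim_inr]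
  congr 1 <;> exact Finset.sum_congr rfl fun i _ => by ring

lemma prod_sq_pow_dvd_det_clearedGram [IsDomain R] [Fintype τ] [DecidableEq τ] (ε : κ → R)
    {l : κ → R} (hl : ∀ i, l i ≠ 0) (B : Matrix κ τ R) :
    ((∏ i, l i) ^ 2) ^ (Fintype.card τ - 1) ∣ (clearedGram ε l B).det := by
  have hdet : (diagonal (l ^ 2)).det = (∏ i, l i) ^ 2 := by
    simp [det_diagonal, Finset.prod_pow]
  have hadj : clearedGram ε l B = Bᵀ * diagonal ε * (diagonal (l ^ 2)).adjugate * B := by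
    simp [clearedGram, adjugate_diagonal, Matrix.mul_assoc, ← diagonal_mul_diagonal,
      Finset.prod_pow]
  rw [hadj, ← hdet]
  refine det_pow_card_pred_dvd_det_mul_adjugate_mul ?_ _ _
  rw [hdet]
  exact pow_ne_zero 2 (Finset.prod_ne_zero_iff.2 fun i _ => hl i)

end ClearedGram

section Degeneration

variable {K κ τ : Type*} [Field K] [Infinite K] [Fintype κ] [DecidableEq κ] [Fintype τ]
  [DecidableEq τ]

lemma det_clearedGram_polynomial_eq_zero {ε : κ → K} {β : Matrix κ τ K}
    (hdet : ∀ s : τ → K, (clearedGram ε ((β * diagonal s) *ᵥ 1) (β * diagonal s)).det = 0)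
    (s : τ → Polynomial K) :
    (clearedGram (Polynomial.C ∘ ε) ((β.map Polynomial.C * diagonal s) *ᵥ 1)
      (β.map Polynomial.C * diagonal s)).det = 0 := by
  refine Polynomial.funext fun t => ?_
  have hε : Polynomial.evalRingHom t ∘ Polynomial.C ∘ ε = ε := by ext; simp
  have hβ : (β.map Polynomial.C * diagonal s).map (Polynomial.evalRingHom t) =
      β * diagonal (Polynomial.eval t ∘ s) := by
    ext i p
    simp [mul_diagonal]
  rw [← Polynomial.coe_evalRingHom, RingHom.map_det, RingHom.mapMatrix_apply,
    clearedGram_mulVec_one_map, hε, hβ, hdet, map_zero]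

/-- Letting the `p`-th column scale like `t ^ w p` and `t → 0`, the row `i` degenerates to its entry
in column `g i`. -/
lemma prod_sum_fiber_eq_zero_of_det_clearedGram_eq_zero {ε : κ → K} {β : Matrix κ τ K}
    {w : τ → ℕ} (hw : w.Injective) {g : κ → τ} (hg : ∀ i, β i (g i) ≠ 0)
    (hlt : ∀ i p, w p < w (g i) → β i p = 0)
    (hdet : ∀ s : τ → K, (clearedGram ε ((β * diagonal s) *ᵥ 1) (β * diagonal s)).det = 0) :
    ∏ p, ∑ i with g i = p, ε i = 0 := by
  let x : κ → Polynomial K := fun i => Polynomial.X ^ w (g i)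
  let s : τ → Polynomial K := fun p => Polynomial.X ^ w p
  let B : Matrix κ τ (Polynomial K) :=
    of fun i p => Polynomial.C (β i p) * Polynomial.X ^ (w p - w (g i))
  have factored : β.map Polynomial.C * diagonal s = diagonal x * B := by
    ext1 i p
    rw [mul_diagonal, diagonal_mul]
    rcases lt_or_ge (w p) (w (g i)) with hp | hp
    · simp [B, hlt i p hp]
    · simp only [map_apply, B, x, s, of_apply]
      rw [mul_left_comm, ← pow_add, Nat.add_sub_cancel' hp]
  have hB : (clearedGram (Polynomial.C ∘ ε) (B *ᵥ 1) B).det = 0 := by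
    have h := det_clearedGram_polynomial_eq_zero hdet s
    have hl : (diagonal x * B) *ᵥ 1 = x * B *ᵥ 1 := by
      rw [← mulVec_mulVec]
      exact funext fun i => mulVec_diagonal x _ i
    rw [factored, hl, clearedGram_smul, det_smul] at h
    refine (mul_eq_zero.1 h).resolve_left (pow_ne_zero _ (pow_ne_zero _ ?_))
    exact Finset.prod_ne_zero_iff.2 fun i _ => pow_ne_zero _ Polynomial.X_ne_zero
  have hB0 : B.map (Polynomial.evalRingHom 0) = of fun i => Pi.single (g i) (β i (g i)) := by
    ext i p
    rcases lt_trichotomy (w p) (w (g i)) with hp | hp | hp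
    · simp [B, hlt i p hp, Pi.single_eq_of_ne (ne_of_apply_ne w hp.ne)]
    · simp [B, hw hp]
    · simp [B, Pi.single_eq_of_ne (ne_of_apply_ne w hp.ne'), (Nat.sub_pos_of_lt hp).ne']
  have hε : Polynomial.evalRingHom 0 ∘ Polynomial.C ∘ ε = ε := by ext; simp
  have hl : (of fun i => Pi.single (g i) (β i (g i))) *ᵥ 1 = fun i => β i (g i) := by
    ext i
    simp [mulVec, dotProduct]
  have h0 := congrArg (Polynomial.evalRingHom 0) hB
  rw [RingHom.map_det, RingHom.mapMatrix_apply, clearedGram_mulVec_one_map, hε, hB0, hl, map_zero,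
    clearedGram_single, det_smul, det_diagonal] at h0
  refine (mul_eq_zero.1 h0).resolve_left (pow_ne_zero _ (pow_ne_zero _ ?_))
  exact Finset.prod_ne_zero_iff.2 fun i _ => hg i

end Degeneration

section Hessian

variable {R σ : Type*} [CommRing R]

/-- The Hessian of `log f`, made polynomial through multiplication by `-f²`; this turns products of
linear forms into cleared Gram matrices. -/
def logHessian (f : MvPolynomial σ R) : Matrix σ σ (MvPolynomial σ R) :=
  of fun j k => pderiv j f * pderiv k f - f * pderiv j (pderiv k f)

/-- The Hessian of `log (f / g)`, made polynomial through multiplication by `-(f g)²`. It is the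
invariant of the pencil generated by `f` and `g` whose minors are compared with its members. -/
def pencilHessian (f g : MvPolynomial σ R) : Matrix σ σ (MvPolynomial σ R) :=
  g ^ 2 • logHessian f - f ^ 2 • logHessian g

/-- The coefficient vector of the 1-form `g df - f dg`, which up to a scalar depends only on the
pencil generated by `f` and `g`. -/
def gradWronskian (f g : MvPolynomial σ R) : σ → MvPolynomial σ R :=
  fun j => g * pderiv j f - f * pderiv j g

lemma logHessian_mul (f g : MvPolynomial σ R) :
    logHessian (f * g) = g ^ 2 • logHessian f + f ^ 2 • logHessian g := by
  ext1 j k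
  simp only [logHessian, of_apply, Matrix.add_apply, Matrix.smul_apply, smul_eq_mul,
    Derivation.leibniz, map_add]
  ring

lemma logHessian_prod {κ : Type*} [DecidableEq κ] (s : Finset κ) (l : κ → MvPolynomial σ R) :
    logHessian (∏ i ∈ s, l i) = ∑ i ∈ s, (∏ j ∈ s.erase i, l j) ^ 2 • logHessian (l i) := by
  induction s using Finset.induction_on with
  | empty => ext1 j k; simp [logHessian]
  | insert a s ha ih =>
    rw [Finset.prod_insert ha, Finset.sum_insert ha, Finset.erase_insert ha, logHessian_mul, ih,
      Finset.smul_sum]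
    congr 1
    refine Finset.sum_congr rfl fun i hi => ?_
    rw [Finset.erase_insert_of_ne (ne_of_mem_of_not_mem hi ha).symm,
      Finset.prod_insert (fun h => ha (Finset.mem_of_mem_erase h)), mul_pow, mul_smul]

lemma smul_pencilHessian_linear_combination (f g : MvPolynomial σ R) (r s r' s' : R) :
    (f * g) • pencilHessian (C r * f + C s * g) (C r' * f + C s' * g) =
      (C (r * s' - r' * s) : MvPolynomial σ R) •
        (((C r * f + C s * g) * (C r' * f + C s' * g)) • pencilHessian f g +
          (C (r * r') * f ^ 2 - C (s * s') * g ^ 2) •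
            vecMulVec (gradWronskian f g) (gradWronskian f g)) := by
  ext1 j k
  simp only [pencilHessian, logHessian, gradWronskian, of_apply, Matrix.sub_apply,
    Matrix.add_apply, Matrix.smul_apply, smul_eq_mul, vecMulVec_apply, map_add, pderiv_C_mul,
    map_sub, map_mul]
  ring

section Euler

variable [Fintype σ] {d d' : ℕ} {f g : MvPolynomial σ R}

lemma logHessian_mulVec_X (hf : f.IsHomogeneous d) :
    logHessian f *ᵥ X = f • fun j => pderiv j f := by
  classical
  ext1 j
  have euler := hf.sum_X_mul_pderiv
  have deriv_euler := congrArg (pderiv j) euler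
  simp only [map_sum, Derivation.leibniz, pderiv_X, smul_eq_mul, map_nsmul, Finset.sum_add_distrib,
    Pi.single_apply, mul_ite, mul_one, mul_zero, Finset.sum_ite_eq', Finset.mem_univ, if_true]
    at deriv_euler
  simp only [mulVec, dotProduct, logHessian, of_apply, sub_mul, Finset.sum_sub_distrib,
    Pi.smul_apply, smul_eq_mul]
  have sum_grad : ∑ k, pderiv j f * pderiv k f * X k = pderiv j f * (d • f) := by
    rw [← euler, Finset.mul_sum]
    exact Finset.sum_congr rfl fun k _ => by ring
  have sum_hess :
      ∑ k, f * pderiv j (pderiv k f) * X k = f * ∑ k, X k * pderiv j (pderiv k f) := by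
    rw [Finset.mul_sum]
    exact Finset.sum_congr rfl fun k _ => by ring
  rw [sum_grad, sum_hess]
  simp only [nsmul_eq_mul] at deriv_euler ⊢
  linear_combination -f * deriv_euler

lemma pencilHessian_mulVec_X (hf : f.IsHomogeneous d) (hg : g.IsHomogeneous d') :
    pencilHessian f g *ᵥ X = (f * g) • gradWronskian f g := by
  rw [pencilHessian, sub_mulVec, smul_mulVec, smul_mulVec, logHessian_mulVec_X hf,
    logHessian_mulVec_X hg]
  ext1 j
  simp only [gradWronskian, Pi.sub_apply, Pi.smul_apply, smul_eq_mul]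
  ring

lemma gradWronskian_dotProduct_X (hf : f.IsHomogeneous d) (hg : g.IsHomogeneous d) :
    gradWronskian f g ⬝ᵥ X = 0 := by
  have expand : gradWronskian f g ⬝ᵥ X =
      g * ∑ j, X j * pderiv j f - f * ∑ j, X j * pderiv j g := by
    simp only [gradWronskian, dotProduct, Finset.mul_sum, ← Finset.sum_sub_distrib]
    exact Finset.sum_congr rfl fun j _ => by ring
  rw [expand, hf.sum_X_mul_pderiv, hg.sum_X_mul_pderiv, nsmul_eq_mul, nsmul_eq_mul]
  ring

/-- Since `H X = f g ω` and `ω · X = 0`, passing to other members of the pencil only scales the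
compressed Hessian and adds multiples of its column `k` to the other columns. -/
lemma det_compression_pencilHessian_linear_combination [IsDomain R] {τ : Type*} [Fintype τ]
    [DecidableEq τ] (hf : f.IsHomogeneous d) (hg : g.IsHomogeneous d) (hfg : f * g ≠ 0)
    (r s r' s' : R) {V : Matrix σ τ (MvPolynomial σ R)} {k : τ} (hV : V.col k = X) :
    (f * g) ^ Fintype.card τ *
        (Vᵀ * pencilHessian (C r * f + C s * g) (C r' * f + C s' * g) * V).det =
      (C (r * s' - r' * s) * ((C r * f + C s * g) * (C r' * f + C s' * g))) ^ Fintype.card τ *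
        (Vᵀ * pencilHessian f g * V).det := by
  let ω := Vᵀ *ᵥ gradWronskian f g
  have hcol : (Vᵀ * pencilHessian f g * V).col k = (f * g) • ω := by
    rw [← mulVec_single_one, ← mulVec_mulVec, mulVec_single_one, hV, ← mulVec_mulVec,
      pencilHessian_mulVec_X hf hg, mulVec_smul]
  have hω : ω k = 0 := by
    rw [← gradWronskian_dotProduct_X hf hg, dotProduct_comm, ← hV]
    rfl
  have compressed : (f * g) •
        (Vᵀ * pencilHessian (C r * f + C s * g) (C r' * f + C s' * g) * V) =
      (C (r * s' - r' * s) : MvPolynomial σ R) •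
        (((C r * f + C s * g) * (C r' * f + C s' * g)) • (Vᵀ * pencilHessian f g * V) +
          (C (r * r') * f ^ 2 - C (s * s') * g ^ 2) • vecMulVec ω ω) := by
    rw [← Matrix.smul_mul, ← Matrix.mul_smul, smul_pencilHessian_linear_combination]
    simp only [Matrix.mul_add, Matrix.add_mul, Matrix.mul_smul, Matrix.smul_mul, mul_vecMulVec,
      vecMulVec_mul, ω, mulVec_transpose]
  have scaled : (f * g) • (f * g) •
        (Vᵀ * pencilHessian (C r * f + C s * g) (C r' * f + C s' * g) * V) =
      (f * g * (C (r * s' - r' * s) * ((C r * f + C s * g) * (C r' * f + C s' * g)))) •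
          (Vᵀ * pencilHessian f g * V) +
        (C (r * s' - r' * s) * (C (r * r') * f ^ 2 - C (s * s') * g ^ 2)) •
          vecMulVec ((Vᵀ * pencilHessian f g * V).col k) ω := by
    rw [hcol, compressed, smul_vecMulVec]
    module
  have hdet := congrArg det scaled
  rw [det_smul, det_smul, det_smul_add_vecMulVec_col _ _ _ hω, mul_pow (f * g), mul_assoc] at hdet
  exact mul_left_cancel₀ (pow_ne_zero _ hfg) hdet

end Euler
end Hessian

section LinearForms

variable {R σ : Type*} [CommRing R] [Fintype σ]

/-- The linear form with coefficient vector `a`, as a linear map in `a`, so that spans of linear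
forms can be computed in `σ → R`. -/
def linForm : (σ → R) →ₗ[R] MvPolynomial σ R :=
  Fintype.linearCombination R X

lemma linForm_apply (a : σ → R) : linForm a = ∑ j, C (a j) * X j := by
  simp only [linForm, Fintype.linearCombination_apply, smul_eq_C_mul]

lemma eval_linForm (x a : σ → R) : eval x (linForm a) = a ⬝ᵥ x := by
  simp [linForm_apply, dotProduct]

lemma pderiv_linForm (a : σ → R) (j : σ) : pderiv j (linForm a) = C (a j) := by
  classical
  simp [linForm_apply, pderiv_X, Pi.single_apply]

lemma isHomogeneous_linForm (a : σ → R) : (linForm a).IsHomogeneous 1 := by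
  rw [linForm_apply]
  exact IsHomogeneous.sum _ _ _ fun j _ => isHomogeneous_C_mul_X (a j) j

lemma isHomogeneous_prod_linForm {ι : Type*} [Fintype ι] (a : ι → σ → R) :
    (∏ i, linForm (a i)).IsHomogeneous (Fintype.card ι) := by
  simpa using IsHomogeneous.prod Finset.univ (fun i => linForm (a i)) _
    fun i _ => isHomogeneous_linForm (a i)

lemma linForm_ne_zero {a : σ → R} (ha : a ≠ 0) : linForm a ≠ 0 := fun h =>
  ha <| funext fun j => C_injective σ R <| by
    rw [← pderiv_linForm, h, map_zero, Pi.zero_apply, C_0]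

lemma exists_eq_linForm {p : MvPolynomial σ R} (hp : p.IsHomogeneous 1) : ∃ a, p = linForm a := by
  have hmem : p ∈ homogeneousSubmodule σ R 1 := hp
  rw [homogeneousSubmodule_one_eq_span_X, ← Fintype.range_linearCombination] at hmem
  obtain ⟨a, ha⟩ := hmem
  exact ⟨a, ha.symm⟩

lemma not_isUnit_linForm [Nontrivial R] (a : σ → R) : ¬ IsUnit (linForm a) := fun h => by
  have h0 := h.map (eval (0 : σ → R))
  rw [eval_linForm, dotProduct_zero] at h0
  exact not_isUnit_zero h0

lemma logHessian_linForm (a : σ → R) (j k : σ) : logHessian (linForm a) j k = C (a j * a k) := by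
  simp [logHessian, pderiv_linForm]

variable {ι ι' : Type*} [Fintype ι] [DecidableEq ι] [Fintype ι'] [DecidableEq ι']

lemma logHessian_prod_linForm (a : ι → σ → R) :
    logHessian (∏ i, linForm (a i)) = clearedGram 1 (linForm ∘ a) ((of a).map C) := by
  ext1 j k
  simp only [logHessian_prod, clearedGram_apply, Matrix.sum_apply, Matrix.smul_apply, smul_eq_mul,
    logHessian_linForm, C_mul, map_apply, of_apply, Pi.one_apply, one_mul, Function.comp_apply,
    mul_assoc]

lemma pencilHessian_prod_linForm (a : ι → σ → R) (b : ι' → σ → R) :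
    pencilHessian (∏ i, linForm (a i)) (∏ i, linForm (b i)) =
      clearedGram (Sum.elim 1 (-1)) (linForm ∘ Sum.elim a b) ((of (Sum.elim a b)).map C) := by
  have hB : (of (Sum.elim a b)).map C =
      (fromRows ((of a).map C) ((of b).map C) : Matrix _ _ (MvPolynomial σ R)) := by
    ext1 (i | i) j <;> rfl
  rw [pencilHessian, logHessian_prod_linForm, logHessian_prod_linForm, Sum.comp_elim, hB,
    clearedGram_sumElim, clearedGram_neg, smul_neg, sub_eq_add_neg]
  rfl

end LinearForms

section Divisibility

lemma isHomogeneous_clearedGram_apply {R σ κ τ : Type*} [CommRing R] [Fintype κ] [DecidableEq κ]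
    {ε l : κ → MvPolynomial σ R} {B : Matrix κ τ (MvPolynomial σ R)} {e : τ → ℕ}
    (hε : ∀ i, (ε i).IsHomogeneous 0) (hl : ∀ i, (l i).IsHomogeneous 1)
    (hB : ∀ i p, (B i p).IsHomogeneous (e p)) (p q : τ) :
    (clearedGram ε l B p q).IsHomogeneous ((Fintype.card κ - 1) * 2 + e p + e q) := by
  rw [clearedGram_apply]
  refine IsHomogeneous.sum _ _ _ fun i _ => ?_
  have hprod := IsHomogeneous.prod (Finset.univ.erase i) l _ fun j _ => hl j
  simpa using (((hε i).mul (hprod.pow 2)).mul (hB i p)).mul (hB i q)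

variable {K σ : Type*} [Field K]

lemma eq_zero_of_isHomogeneous_of_dvd {f g : MvPolynomial σ K} {m n : ℕ}
    (hf : f.IsHomogeneous m) (hg : g.IsHomogeneous n) (hnm : n < m) (hdvd : f ∣ g) : g = 0 := by
  by_contra hg0
  have hle := totalDegree_le_of_dvd_of_isDomain hdvd hg0
  rw [hf.totalDegree (ne_zero_of_dvd_ne_zero hg0 hdvd), hg.totalDegree hg0] at hle
  exact hle.not_gt hnm

lemma isRelPrime_C_mul_add_C_mul {F G : MvPolynomial σ K} (h : IsRelPrime F G) (r : K) {s : K}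
    (hs : s ≠ 0) : IsRelPrime F (C r * F + C s * G) := by
  rw [mul_comm (C r)]
  exact ((isRelPrime_mul_unit_left_right (hs.isUnit.map C)).2 h).mul_add_left_right _

lemma isRelPrime_mul_mul_pencil {F G : MvPolynomial σ K} (h : IsRelPrime F G) {r s r' s' : K}
    (hr : r ≠ 0) (hs : s ≠ 0) (hr' : r' ≠ 0) (hs' : s' ≠ 0) :
    IsRelPrime (F * G) ((C r * F + C s * G) * (C r' * F + C s' * G)) := by
  have hG {r s : K} (hr : r ≠ 0) : IsRelPrime G (C r * F + C s * G) := by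
    rw [add_comm]
    exact isRelPrime_C_mul_add_C_mul h.symm s hr
  exact .mul_left
    (.mul_right (isRelPrime_C_mul_add_C_mul h r hs) (isRelPrime_C_mul_add_C_mul h r' hs'))
    (.mul_right (hG hr) (hG hr'))

end Divisibility

section Vanishing

variable {K σ : Type*} [Field K] [Fintype σ]

section Compression

variable {τ ι ι' : Type*} [Fintype τ] [DecidableEq τ] [Fintype ι] [Fintype ι']

lemma prod_mul_prod_pow_dvd_det_compression {a : ι → σ → K} {b : ι' → σ → K} (ha : ∀ i, a i ≠ 0)
    (hb : ∀ i, b i ≠ 0) (V : Matrix σ τ (MvPolynomial σ K)) :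
    ((∏ i, linForm (a i)) * ∏ i, linForm (b i)) ^ (2 * (Fintype.card τ - 1)) ∣
      (Vᵀ * pencilHessian (∏ i, linForm (a i)) (∏ i, linForm (b i)) * V).det := by
  classical
  have hl : ∀ i, (linForm ∘ Sum.elim a b) i ≠ 0 := by
    rintro (i | i)
    exacts [linForm_ne_zero (ha i), linForm_ne_zero (hb i)]
  have hdvd := prod_sq_pow_dvd_det_clearedGram (Sum.elim 1 (-1)) hl
    ((of (Sum.elim a b)).map (C (σ := σ)) * V)
  rwa [clearedGram_mul, ← pencilHessian_prod_linForm, ← pow_mul, Fintype.prod_sum_type] at hdvd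

lemma isHomogeneous_det_compression (a : ι → σ → K) (b : ι' → σ → K)
    {V : Matrix σ τ (MvPolynomial σ K)} {e : τ → ℕ} (hV : ∀ j p, (V j p).IsHomogeneous (e p)) :
    (Vᵀ * pencilHessian (∏ i, linForm (a i)) (∏ i, linForm (b i)) * V).det.IsHomogeneous
      (Fintype.card τ * ((Fintype.card ι + Fintype.card ι' - 1) * 2) + 2 * ∑ p, e p) := by
  classical
  rw [pencilHessian_prod_linForm, ← clearedGram_mul]
  have hε (i : ι ⊕ ι') : (Sum.elim 1 (-1) i : MvPolynomial σ K).IsHomogeneous 0 := by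
    rcases i with _ | _
    exacts [isHomogeneous_one σ K, (isHomogeneous_one σ K).neg]
  have hl (i : ι ⊕ ι') : ((linForm ∘ Sum.elim a b) i).IsHomogeneous 1 := isHomogeneous_linForm _
  have hB (i : ι ⊕ ι') (p : τ) :
      (((of (Sum.elim a b)).map (C (σ := σ)) * V) i p).IsHomogeneous (e p) :=
    IsHomogeneous.sum _ _ _ fun j _ => by simpa using (isHomogeneous_C σ _).mul (hV j p)
  have hdet := isHomogeneous_det fun p q => isHomogeneous_clearedGram_apply hε hl hB p q
  simpa [Finset.sum_add_distrib, two_mul, add_assoc] using hdet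

end Compression

section Evaluation

variable {R τ κ κ' : Type*} [CommRing R] [Fintype τ] [DecidableEq τ] [Fintype κ] [DecidableEq κ]
  [Fintype κ'] [DecidableEq κ']

lemma det_updateCol_one (k : τ) : ((1 : Matrix τ τ R).updateCol k 1).det = 1 := by
  rw [← cramer_apply, cramer_one]
  rfl

lemma eval_det_compression_pencilHessian (a : κ → σ → R) (b : κ' → σ → R) (V : Matrix σ τ R)
    (k : τ) :
    eval (V *ᵥ 1) (((V.map C).updateCol k X)ᵀ *
        pencilHessian (∏ i, linForm (a i)) (∏ i, linForm (b i)) * (V.map C).updateCol k X).det =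
      (clearedGram (Sum.elim 1 (-1)) ((of (Sum.elim a b) * V) *ᵥ 1)
        (of (Sum.elim a b) * V)).det := by
  set x := V *ᵥ 1
  have hε : eval x ∘ Sum.elim (1 : κ → MvPolynomial σ R) (-1 : κ' → MvPolynomial σ R) =
      (Sum.elim 1 (-1) : κ ⊕ κ' → R) := by
    ext (i | i) <;> simp
  have hl : eval x ∘ linForm ∘ Sum.elim a b = (of (Sum.elim a b) * V) *ᵥ 1 := by
    rw [← mulVec_mulVec]
    exact funext fun i => eval_linForm x _
  have hV : ((V.map C).updateCol k X).map (eval x) = V * (1 : Matrix τ τ R).updateCol k 1 := by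
    rw [mul_updateCol, Matrix.mul_one, map_updateCol, map_map]
    congr 1
    · ext; simp
    · ext; simp [x]
  have hB : ((of (Sum.elim a b)).map C).map (eval x) = of (Sum.elim a b) := by
    ext; simp
  rw [pencilHessian_prod_linForm, ← clearedGram_mul, RingHom.map_det, RingHom.mapMatrix_apply,
    clearedGram_map, hε, hl, Matrix.map_mul, hB, hV, ← Matrix.mul_assoc, clearedGram_mul, det_mul,
    det_mul, det_transpose, det_updateCol_one, mul_one, one_mul]

end Evaluation

variable {ι : Type*} [Fintype ι]

/-- The rows `a 0`, `a 1`, `a 2`, `a 3` list the linear factors of four pairwise distinct members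
`F`, `G`, `r F + s G`, `r' F + s' G` of the pencil generated by coprime forms `F` and `G`. -/
structure IsSplitQuadruple (a : Fin 4 → ι → σ → K) (r s r' s' : K) : Prop where
  ne_zero : ∀ k i, a k i ≠ 0
  isRelPrime : IsRelPrime (∏ i, linForm (a 0 i)) (∏ i, linForm (a 1 i))
  prod_two : ∏ i, linForm (a 2 i) =
    C r * ∏ i, linForm (a 0 i) + C s * ∏ i, linForm (a 1 i)
  prod_three : ∏ i, linForm (a 3 i) =
    C r' * ∏ i, linForm (a 0 i) + C s' * ∏ i, linForm (a 1 i)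
  coeff_two_ne_zero : r ≠ 0 ∧ s ≠ 0
  coeff_three_ne_zero : r' ≠ 0 ∧ s' ≠ 0
  coeff_det_ne_zero : r * s' - r' * s ≠ 0

namespace IsSplitQuadruple

variable {a : Fin 4 → ι → σ → K} {r s r' s' : K}

lemma prod_two_mul_prod_three_sq_dvd_det_compression (h : IsSplitQuadruple a r s r' s')
    {V : Matrix σ (Fin 4) (MvPolynomial σ K)} {k : Fin 4} (hVk : V.col k = X) :
    ((∏ i, linForm (a 2 i)) * ∏ i, linForm (a 3 i)) ^ 2 ∣
      (Vᵀ * pencilHessian (∏ i, linForm (a 0 i)) (∏ i, linForm (a 1 i)) * V).det := by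
  have prod_ne_zero (k : Fin 4) : ∏ i, linForm (a k i) ≠ 0 :=
    Finset.prod_ne_zero_iff.2 fun i _ => linForm_ne_zero (h.ne_zero k i)
  have hdet := det_compression_pencilHessian_linear_combination (isHomogeneous_prod_linForm (a 0))
    (isHomogeneous_prod_linForm (a 1)) (mul_ne_zero (prod_ne_zero 0) (prod_ne_zero 1))
    r s r' s' hVk
  have hdvd := (prod_mul_prod_pow_dvd_det_compression (h.ne_zero 2) (h.ne_zero 3) V).mul_left
    (((∏ i, linForm (a 0 i)) * ∏ i, linForm (a 1 i)) ^ Fintype.card (Fin 4))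
  rw [← h.prod_two, ← h.prod_three] at hdet
  rw [hdet, Fintype.card_fin, mul_pow (C _), mul_assoc,
    ((h.coeff_det_ne_zero.isUnit.map C).pow 4).dvd_mul_left, show 2 * (4 - 1) = 4 + 2 from rfl,
    pow_add] at hdvd
  exact (mul_dvd_mul_iff_left
    (pow_ne_zero 4 (mul_ne_zero (prod_ne_zero 2) (prod_ne_zero 3)))).1 hdvd

/-- With `D` the degree of the four members, the determinant has degree `16 D - 6` but is divisible
by a form of degree `16 D`. -/
lemma det_compression_pencilHessian_eq_zero [Nonempty ι] (h : IsSplitQuadruple a r s r' s')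
    {V : Matrix σ (Fin 4) (MvPolynomial σ K)} {k : Fin 4} (hVk : V.col k = X)
    (hV : ∀ j p, (V j p).IsHomogeneous ((Pi.single k 1 : Fin 4 → ℕ) p)) :
    (Vᵀ * pencilHessian (∏ i, linForm (a 0 i)) (∏ i, linForm (a 1 i)) * V).det = 0 := by
  have hcop : IsRelPrime ((∏ i, linForm (a 0 i)) * ∏ i, linForm (a 1 i))
      ((∏ i, linForm (a 2 i)) * ∏ i, linForm (a 3 i)) := by
    rw [h.prod_two, h.prod_three]
    exact isRelPrime_mul_mul_pencil h.isRelPrime h.coeff_two_ne_zero.1 h.coeff_two_ne_zero.2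
      h.coeff_three_ne_zero.1 h.coeff_three_ne_zero.2
  have hdeg := (((isHomogeneous_prod_linForm (a 0)).mul (isHomogeneous_prod_linForm (a 1))).pow
    (2 * (Fintype.card (Fin 4) - 1))).mul
      (((isHomogeneous_prod_linForm (a 2)).mul (isHomogeneous_prod_linForm (a 3))).pow 2)
  refine eq_zero_of_isHomogeneous_of_dvd hdeg (isHomogeneous_det_compression (a 0) (a 1) hV) ?_
    (hcop.pow.mul_dvd (prod_mul_prod_pow_dvd_det_compression (h.ne_zero 0) (h.ne_zero 1) V)
      (h.prod_two_mul_prod_three_sq_dvd_det_compression hVk))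
  have hpos : 0 < Fintype.card ι := Fintype.card_pos
  simp only [Fintype.card_fin, Finset.sum_pi_single', Finset.mem_univ, if_true]
  omega

lemma det_clearedGram_eq_zero [DecidableEq ι] [Nonempty ι] (h : IsSplitQuadruple a r s r' s')
    (V : Matrix σ (Fin 4) K) :
    (clearedGram (Sum.elim 1 (-1)) ((of (Sum.elim (a 0) (a 1)) * V) *ᵥ 1)
      (of (Sum.elim (a 0) (a 1)) * V)).det = 0 := by
  have hV (j : σ) (p : Fin 4) : ((V.map C).updateCol 0 X j p : MvPolynomial σ K).IsHomogeneous
      ((Pi.single 0 1 : Fin 4 → ℕ) p) := by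
    rcases eq_or_ne p 0 with rfl | hp
    · simpa using isHomogeneous_X K j
    · simpa [hp] using isHomogeneous_C σ (V j p)
  rw [← eval_det_compression_pencilHessian _ _ _ 0,
    h.det_compression_pencilHessian_eq_zero (by ext1 j; simp) hV, map_zero]

end IsSplitQuadruple
end Vanishing

section Flags

variable {K σ ι : Type*} [Field K] [Fintype σ]

lemma exists_forall_dotProduct_eq_zero_and_ne_zero [Infinite K] [Finite ι]
    (W : Submodule K (σ → K)) (c : ι → σ → K) :
    ∃ x : σ → K, (∀ w ∈ W, w ⬝ᵥ x = 0) ∧ ∀ i, c i ∉ W → c i ⬝ᵥ x ≠ 0 := by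
  classical
  obtain ⟨f, hf⟩ := Module.exists_dual_forall_apply_ne_zero (K := K)
    (fun i : {i // c i ∉ W} => W.mkQ (c i)) fun i => by simpa using i.2
  have hx (v : σ → K) : v ⬝ᵥ (dotProductEquiv K σ).symm (f ∘ₗ W.mkQ) = f (W.mkQ v) := by
    rw [dotProduct_comm, ← dotProductEquiv_apply_apply, LinearEquiv.apply_symm_apply]
    rfl
  refine ⟨(dotProductEquiv K σ).symm (f ∘ₗ W.mkQ), fun w hw => ?_, fun i hi => ?_⟩
  · rw [hx, Submodule.mkQ_apply, (Submodule.Quotient.mk_eq_zero W).2 hw, map_zero]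
  · rw [hx]
    exact hf ⟨i, hi⟩

variable [CharZero K] [Fintype ι] {n : ℕ}

lemma prod_sum_signs_fiber_ne_zero {g : ι ⊕ ι → Fin (n + 2)}
    (hinl : ∀ k : Fin (n + 1), ∃ i, g (Sum.inl i) = k.castSucc)
    (hinr : ∀ i, g (Sum.inr i) = Fin.last (n + 1)) :
    ∏ p, ∑ i with g i = p, (Sum.elim 1 (-1) : ι ⊕ ι → K) i ≠ 0 := by
  let m (p : Fin (n + 2)) : ℕ := Finset.card {i | g (Sum.inl i) = p}
  have hm (k : Fin (n + 1)) : 0 < m k.castSucc := by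
    obtain ⟨i, hi⟩ := hinl k
    exact Finset.card_pos.2 ⟨i, by simpa using hi⟩
  have hcard : (∑ k : Fin (n + 1), m k.castSucc) + m (Fin.last _) = Fintype.card ι := by
    rw [← Fin.sum_univ_castSucc]
    exact (Finset.card_eq_sum_card_fiberwise fun i _ => Finset.mem_univ _).symm
  have hsum (p : Fin (n + 2)) : ∑ i with g i = p, (Sum.elim 1 (-1) : ι ⊕ ι → K) i =
      m p - if Fin.last _ = p then (Fintype.card ι : K) else 0 := by
    rw [Finset.sum_filter, Fintype.sum_sum_type]
    simp only [Sum.elim_inl, Sum.elim_inr, Pi.one_apply, Pi.neg_apply, hinr, Finset.sum_boole, m]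
    split_ifs <;> simp [sub_eq_add_neg]
  refine Finset.prod_ne_zero_iff.2 fun p _ => ?_
  rw [hsum]
  refine Fin.lastCases ?_ (fun k => ?_) p
  · rw [if_pos rfl, ← hcard, Nat.cast_add, sub_add_cancel_right, neg_ne_zero, Nat.cast_ne_zero]
    exact (Finset.sum_pos (fun k _ => hm k) Finset.univ_nonempty).ne'
  · rw [if_neg (Fin.castSucc_lt_last k).ne', sub_zero, Nat.cast_ne_zero]
    exact Nat.ne_of_gt (hm k)

/-- The columns of the compression are generic vectors annihilated by the members of the flag, so a
row of the Gram matrix degenerates to the last member not containing it. -/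
lemma exists_mem_of_det_clearedGram_eq_zero [DecidableEq ι] {a b : ι → σ → K} (ha : ∀ i, a i ≠ 0)
    (hdet : ∀ V : Matrix σ (Fin (n + 2)) K, (clearedGram (Sum.elim 1 (-1))
      ((of (Sum.elim a b) * V) *ᵥ 1) (of (Sum.elim a b) * V)).det = 0)
    {W : Fin (n + 2) → Submodule K (σ → K)} (hW : Monotone W) (hW0 : W 0 = ⊥)
    (hjump : ∀ k : Fin (n + 1), ∃ i, a i ∈ W k.succ ∧ a i ∉ W k.castSucc) :
    ∃ j, b j ∈ W (Fin.last (n + 1)) := by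
  by_contra! hb
  have last_notMem (i : ι ⊕ ι) : ∃ p, Maximal (fun q => Sum.elim a b i ∉ W q) p := by
    refine (Set.toFinite {q | Sum.elim a b i ∉ W q}).exists_maximal ⟨0, ?_⟩
    rcases i with i | j
    · simpa [hW0] using ha i
    · exact fun h => hb j (hW (Fin.zero_le _) h)
  choose g hg using last_notMem
  choose e he_mem he_notMem using fun p =>
    exists_forall_dotProduct_eq_zero_and_ne_zero (W p) (Sum.elim a b)
  have hdet_scaled (s : Fin (n + 2) → K) := hdet ((of e)ᵀ * diagonal s)
  simp only [← Matrix.mul_assoc] at hdet_scaled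
  refine prod_sum_signs_fiber_ne_zero (K := K) (g := g) (fun k => ?_) (fun j => ?_)
    (prod_sum_fiber_eq_zero_of_det_clearedGram_eq_zero
      (w := fun p => (Fin.rev p : ℕ)) (Fin.val_injective.comp Fin.rev_injective)
      (fun i => he_notMem _ _ (hg i).prop) (fun i p hp => he_mem _ _ ?_) hdet_scaled)
  · obtain ⟨i, hi_mem, hi_notMem⟩ := hjump k
    refine ⟨i, le_antisymm (le_of_not_gt fun hlt => ?_) ((hg (Sum.inl i)).le hi_notMem)⟩
    exact (hg (Sum.inl i)).prop (hW (Fin.castSucc_lt_iff_succ_le.1 hlt) hi_mem)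
  · exact le_antisymm (Fin.le_last _) ((hg (Sum.inr j)).le (hb j))
  · exact not_not.1 ((hg i).not_prop_of_gt (Fin.rev_lt_rev.1 hp))

end Flags

section Multiplicity

variable {K σ ι : Type*} [Field K] [Fintype ι]

/-- Restriction of polynomials to the line through `y` with direction `u`, where multiplicities of
linear factors become multiplicities of roots. -/
def restrictLine (y u : σ → K) : MvPolynomial σ K →ₐ[K] Polynomial K :=
  aeval fun j => Polynomial.C (u j) * Polynomial.X + Polynomial.C (y j)

lemma count_zero_roots_prod_C_mul_X_add_C [DecidableEq K] {u : ι → K} (hu : ∀ i, u i ≠ 0)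
    (y : ι → K) :
    (∏ i, (Polynomial.C (u i) * Polynomial.X + Polynomial.C (y i))).roots.count 0 =
      Finset.card {i | y i = 0} := by
  have hne : ∏ i, (Polynomial.C (u i) * Polynomial.X + Polynomial.C (y i)) ≠ 0 := by
    refine Finset.prod_ne_zero_iff.2 fun i _ h => ?_
    simpa [hu i] using congrArg (Polynomial.coeff · 1) h
  rw [Polynomial.roots_prod _ _ hne, Multiset.count_bind, Finset.card_filter]
  refine Finset.sum_congr rfl fun i _ => ?_
  rw [Polynomial.roots_C_mul_X_add_C _ (hu i), Multiset.count_singleton]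
  simp [hu i]

variable [Fintype σ]

lemma restrictLine_linForm (y u a : σ → K) :
    restrictLine y u (linForm a) =
      Polynomial.C (a ⬝ᵥ u) * Polynomial.X + Polynomial.C (a ⬝ᵥ y) := by
  simp only [restrictLine, linForm_apply, map_sum, map_mul, algHom_C, aeval_X, dotProduct,
    Polynomial.algebraMap_eq, Finset.sum_mul, mul_add, Finset.sum_add_distrib, mul_assoc]

open scoped Classical in
/-- Restrict to a line on which the form of `a i₀` vanishes and which meets the zero space of `W` in
a generic point: the other two products become proportional there, and the multiplicity of that
point counts their factors in `W`. -/
lemma card_mem_eq_card_mem_of_prod_linForm_eq [Infinite K] {a b c : ι → σ → K} {r s : K}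
    (h : ∏ i, linForm (c i) = C r * ∏ i, linForm (a i) + C s * ∏ i, linForm (b i)) (hs : s ≠ 0)
    {i₀ : ι} (hb : ∀ i, b i ∉ Submodule.span K {a i₀}) (hc : ∀ i, c i ∉ Submodule.span K {a i₀})
    {W : Submodule K (σ → K)} (hW : a i₀ ∈ W) :
    Finset.card {i | b i ∈ W} = Finset.card {i | c i ∈ W} := by
  obtain ⟨y, hy_mem, hy_notMem⟩ := exists_forall_dotProduct_eq_zero_and_ne_zero W (Sum.elim b c)
  obtain ⟨u, hu_mem, hu_notMem⟩ :=
    exists_forall_dotProduct_eq_zero_and_ne_zero (Submodule.span K {a i₀}) (Sum.elim b c)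
  have ha : restrictLine y u (∏ i, linForm (a i)) = 0 := by
    rw [map_prod]
    refine Finset.prod_eq_zero (Finset.mem_univ i₀) ?_
    rw [restrictLine_linForm, hy_mem _ hW, hu_mem _ (Submodule.mem_span_singleton_self _),
      map_zero, zero_mul, zero_add]
  have hline := congrArg (fun p => (restrictLine y u p).roots.count 0) h
  simp only [map_add, map_mul, ha, mul_zero, zero_add, algHom_C, Polynomial.algebraMap_eq,
    Polynomial.roots_C_mul _ hs, map_prod, restrictLine_linForm] at hline
  have hub (i : ι) : b i ⬝ᵥ u ≠ 0 := hu_notMem (Sum.inl i) (hb i)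
  have huc (i : ι) : c i ⬝ᵥ u ≠ 0 := hu_notMem (Sum.inr i) (hc i)
  rw [count_zero_roots_prod_C_mul_X_add_C huc, count_zero_roots_prod_C_mul_X_add_C hub] at hline
  have mem_iff_b (i : ι) : b i ∈ W ↔ b i ⬝ᵥ y = 0 :=
    ⟨hy_mem _, not_imp_not.1 (hy_notMem (Sum.inl i))⟩
  have mem_iff_c (i : ι) : c i ∈ W ↔ c i ⬝ᵥ y = 0 :=
    ⟨hy_mem _, not_imp_not.1 (hy_notMem (Sum.inr i))⟩
  simpa only [mem_iff_b, mem_iff_c] using hline.symm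

end Multiplicity

section Counting

lemma apply_eq_apply_of_card_fiber_eq_add {ι S : Type*} [Fintype ι] [DecidableEq S] {f g : ι → S}
    {w : S} (hw : ∃ i, g i = w) (hf : ∀ j, f j ≠ w) (hg : ∀ i, g i ≠ w → ∃ j, f j = g i)
    (hcard : ∀ j, Finset.card {j' | f j' = f j} =
      Finset.card {i | g i = w} + Finset.card {i | g i = f j}) (j j' : ι) :
    f j = f j' := by
  have hwS : w ∉ Finset.univ.image f := by simpa using hf
  have hgS (i : ι) : g i ∈ insert w (Finset.univ.image f) := by
    rcases eq_or_ne (g i) w with h | h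
    · exact Finset.mem_insert.2 (.inl h)
    · obtain ⟨j, hj⟩ := hg i h
      exact Finset.mem_insert.2 (.inr (Finset.mem_image.2 ⟨j, Finset.mem_univ j, hj⟩))
  have card_f : Fintype.card ι = (Finset.univ.image f).card * Finset.card {i | g i = w} +
      ∑ s ∈ Finset.univ.image f, Finset.card {i | g i = s} := by
    rw [← Finset.card_univ, Finset.card_eq_sum_card_image f, ← smul_eq_mul, ← Finset.sum_const,
      ← Finset.sum_add_distrib]
    exact Finset.sum_congr rfl (Finset.forall_mem_image.2 fun j _ => hcard j)
  have card_g : Fintype.card ι = Finset.card {i | g i = w} +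
      ∑ s ∈ Finset.univ.image f, Finset.card {i | g i = s} := by
    rw [← Finset.card_univ, Finset.card_eq_sum_card_fiberwise fun i _ => hgS i,
      Finset.sum_insert hwS]
  have hpos : 0 < Finset.card {i | g i = w} := by
    obtain ⟨i, hi⟩ := hw
    exact Finset.card_pos.2 ⟨i, by simpa using hi⟩
  have hone : (Finset.univ.image f).card = 1 :=
    Nat.eq_of_mul_eq_mul_right hpos (by omega)
  exact Finset.card_le_one.1 hone.le _ (Finset.mem_image_of_mem f (Finset.mem_univ j)) _
    (Finset.mem_image_of_mem f (Finset.mem_univ j'))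

variable {K V ι : Type*} [Field K] [AddCommGroup V] [Module K V]

lemma mem_span_singleton_sup_iff {W : Submodule K V} {x y : V} :
    x ∈ Submodule.span K {y} ⊔ W ↔ Submodule.span K {x} ⊔ W = W ∨
      Submodule.span K {x} ⊔ W = Submodule.span K {y} ⊔ W := by
  refine ⟨fun h => (Submodule.wcovBy_span_singleton_sup y W).eq_or_eq le_sup_right
    (sup_le ((Submodule.span_singleton_le_iff_mem _ _).2 h) le_sup_right), fun h => ?_⟩
  have hx : x ∈ Submodule.span K {x} ⊔ W :=
    Submodule.mem_sup_left (Submodule.mem_span_singleton_self x)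
  rcases h with h | h <;> rw [h] at hx
  exacts [Submodule.mem_sup_right hx, hx]

open scoped Classical in
lemma exists_forall_mem_span_singleton_sup [Fintype ι] {a b : ι → V} {W : Submodule K V}
    (ha : ∃ i, a i ∈ W) (hb : ∀ j, b j ∉ W)
    (hext : ∀ i, a i ∉ W → ∃ j, b j ∈ Submodule.span K {a i} ⊔ W)
    (hmult : ∀ U : Submodule K V, (∃ i, a i ∈ U) → (∃ j, b j ∈ U) →
      Finset.card {i | a i ∈ U} = Finset.card {j | b j ∈ U}) :
    ∃ v, ∀ i, a i ∈ Submodule.span K {v} ⊔ W ∧ b i ∈ Submodule.span K {v} ⊔ W := by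
  have eq_iff (x : V) : Submodule.span K {x} ⊔ W = W ↔ x ∈ W := by
    rw [sup_eq_right, Submodule.span_singleton_le_iff_mem]
  obtain ⟨i₀, hi₀⟩ := ha
  have hlines : ∀ j j', Submodule.span K {b j} ⊔ W = Submodule.span K {b j'} ⊔ W := by
    refine apply_eq_apply_of_card_fiber_eq_add (g := fun i => Submodule.span K {a i} ⊔ W)
      ⟨i₀, (eq_iff _).2 hi₀⟩ (fun j => (eq_iff _).not.2 (hb j)) (fun i hi => ?_) fun j => ?_
    · obtain ⟨j, hj⟩ := hext i ((eq_iff _).not.1 hi)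
      exact ⟨j, (mem_span_singleton_sup_iff.1 hj).resolve_left ((eq_iff _).not.2 (hb j))⟩
    · have hab := hmult (Submodule.span K {b j} ⊔ W) ⟨i₀, Submodule.mem_sup_right hi₀⟩
        ⟨j, Submodule.mem_sup_left (Submodule.mem_span_singleton_self _)⟩
      simp only [mem_span_singleton_sup_iff, (eq_iff _).not.2 (hb _), false_or,
        Finset.filter_or] at hab
      rw [← hab, Finset.card_union_of_disjoint]
      exact Finset.disjoint_filter.2 fun i _ hi h => hb j ((eq_iff _).1 (h.symm.trans hi))
  refine ⟨b i₀, fun i => ⟨?_, mem_span_singleton_sup_iff.2 (.inr (hlines i i₀))⟩⟩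
  by_cases hi : a i ∈ W
  · exact Submodule.mem_sup_right hi
  · obtain ⟨j, hj⟩ := hext i hi
    have h := (mem_span_singleton_sup_iff.1 hj).resolve_left ((eq_iff _).not.2 (hb j))
    exact mem_span_singleton_sup_iff.2 (.inr (h.symm.trans (hlines j i₀)))

end Counting

section Span

variable {K σ ι : Type*} [Field K]

lemma finrank_span_singleton_sup_le {V : Type*} [AddCommGroup V] [Module K V] (v : V)
    (W : Submodule K V) [FiniteDimensional K W] :
    Module.finrank K ↥(Submodule.span K {v} ⊔ W) ≤ Module.finrank K W + 1 := by
  have hsup := Submodule.finrank_add_le_finrank_add_finrank (Submodule.span K {v}) W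
  have hv : Module.finrank K ↥(Submodule.span K {v}) ≤ 1 := by
    simpa using finrank_span_le_card (R := K) ({v} : Set V)
  omega

variable [Fintype σ] [Fintype ι]

lemma notMem_span_singleton_of_isRelPrime_prod_linForm {a b : ι → σ → K}
    (h : IsRelPrime (∏ i, linForm (a i)) (∏ i, linForm (b i))) (i j : ι) :
    b j ∉ Submodule.span K {a i} := by
  intro hmem
  obtain ⟨t, ht⟩ := Submodule.mem_span_singleton.1 hmem
  have hdvd : linForm (a i) ∣ linForm (b j) := by
    rw [← ht, map_smul, smul_eq_C_mul]
    exact dvd_mul_left _ _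
  exact not_isUnit_linForm (a i) (h (Finset.dvd_prod_of_mem _ (Finset.mem_univ i))
    (hdvd.trans (Finset.dvd_prod_of_mem _ (Finset.mem_univ j))))

namespace IsSplitQuadruple

variable {a : Fin 4 → ι → σ → K} {r s r' s' : K}

open scoped Classical in
lemma card_mem_eq_card_mem [Infinite K] (h : IsSplitQuadruple a r s r' s')
    {W : Submodule K (σ → K)} (h₀ : ∃ i, a 0 i ∈ W) (h₁ : ∃ j, a 1 j ∈ W) :
    Finset.card {i | a 0 i ∈ W} = Finset.card {j | a 1 j ∈ W} := by
  obtain ⟨i₀, hi₀⟩ := h₀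
  obtain ⟨j₀, hj₀⟩ := h₁
  have prod_two' := h.prod_two.trans (add_comm _ _)
  have notMem₀ := notMem_span_singleton_of_isRelPrime_prod_linForm
    (h.prod_two ▸ isRelPrime_C_mul_add_C_mul h.isRelPrime r h.coeff_two_ne_zero.2)
  have notMem₁ := notMem_span_singleton_of_isRelPrime_prod_linForm
    (prod_two' ▸ isRelPrime_C_mul_add_C_mul h.isRelPrime.symm s h.coeff_two_ne_zero.1)
  rw [card_mem_eq_card_mem_of_prod_linForm_eq prod_two' h.coeff_two_ne_zero.1
      (notMem_span_singleton_of_isRelPrime_prod_linForm h.isRelPrime.symm j₀) (notMem₁ j₀) hj₀,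
    card_mem_eq_card_mem_of_prod_linForm_eq h.prod_two h.coeff_two_ne_zero.2
      (notMem_span_singleton_of_isRelPrime_prod_linForm h.isRelPrime i₀) (notMem₀ i₀) hi₀]

variable [CharZero K]

lemma exists_mem_span_singleton_sup (h : IsSplitQuadruple a r s r' s') {i₀ i₁ i₂ : ι}
    (h₁ : a 0 i₁ ∉ Submodule.span K {a 0 i₀})
    (h₂ : a 0 i₂ ∉ Submodule.span K {a 0 i₁} ⊔ Submodule.span K {a 0 i₀}) :
    ∃ j, a 1 j ∈ Submodule.span K {a 0 i₂} ⊔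
      (Submodule.span K {a 0 i₁} ⊔ Submodule.span K {a 0 i₀}) := by
  classical
  have : Nonempty ι := ⟨i₀⟩
  have self_mem (v : σ → K) (W : Submodule K (σ → K)) : v ∈ Submodule.span K {v} ⊔ W :=
    Submodule.mem_sup_left (Submodule.mem_span_singleton_self v)
  refine exists_mem_of_det_clearedGram_eq_zero (h.ne_zero 0) h.det_clearedGram_eq_zero
    (W := ![⊥, Submodule.span K {a 0 i₀},
      Submodule.span K {a 0 i₁} ⊔ Submodule.span K {a 0 i₀},
      Submodule.span K {a 0 i₂} ⊔ (Submodule.span K {a 0 i₁} ⊔ Submodule.span K {a 0 i₀})])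
    (Fin.monotone_iff_le_succ.2 fun k => ?_) rfl fun k => ?_
  · fin_cases k
    exacts [bot_le, le_sup_right, le_sup_right]
  · fin_cases k
    · exact ⟨i₀, Submodule.mem_span_singleton_self _, (Submodule.mem_bot K).not.2 (h.ne_zero 0 i₀)⟩
    · exact ⟨i₁, self_mem _ _, h₁⟩
    · exact ⟨i₂, self_mem _ _, h₂⟩

lemma exists_submodule_finrank_le_two [Nonempty ι] (h : IsSplitQuadruple a r s r' s') :
    ∃ W : Submodule K (σ → K), Module.finrank K W ≤ 2 ∧ (∃ i, a 0 i ∈ W) ∧ (∀ j, a 1 j ∉ W) ∧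
      ∀ i, a 0 i ∉ W → ∃ j, a 1 j ∈ Submodule.span K {a 0 i} ⊔ W := by
  have finrank_le (i : ι) : Module.finrank K ↥(Submodule.span K {a 0 i}) ≤ 1 :=
    (finrank_span_singleton (h.ne_zero 0 i)).le
  by_cases hline : ∃ i₀ i₁, a 0 i₁ ∉ Submodule.span K {a 0 i₀} ∧
      ∀ j, a 1 j ∉ Submodule.span K {a 0 i₁} ⊔ Submodule.span K {a 0 i₀}
  · obtain ⟨i₀, i₁, h₁, hfree⟩ := hline
    exact ⟨_, (finrank_span_singleton_sup_le _ _).trans (Nat.succ_le_succ (finrank_le i₀)),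
      ⟨i₀, Submodule.mem_sup_right (Submodule.mem_span_singleton_self _)⟩, hfree,
      fun _ hi => h.exists_mem_span_singleton_sup h₁ hi⟩
  · push Not at hline
    let i₀ : ι := Classical.arbitrary ι
    exact ⟨Submodule.span K {a 0 i₀}, (finrank_le i₀).trans one_le_two,
      ⟨i₀, Submodule.mem_span_singleton_self _⟩,
      notMem_span_singleton_of_isRelPrime_prod_linForm h.isRelPrime i₀, hline i₀⟩

lemma exists_submodule_finrank_le_three (h : IsSplitQuadruple a r s r' s') :
    ∃ U : Submodule K (σ → K), Module.finrank K U ≤ 3 ∧ ∀ i, a 0 i ∈ U ∧ a 1 i ∈ U := by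
  rcases isEmpty_or_nonempty ι
  · exact ⟨⊥, by simp, isEmptyElim⟩
  · obtain ⟨W, hW, hex, hfree, hext⟩ := h.exists_submodule_finrank_le_two
    obtain ⟨v, hv⟩ := exists_forall_mem_span_singleton_sup hex hfree hext
      fun _ => h.card_mem_eq_card_mem
    exact ⟨_, (finrank_span_singleton_sup_le v W).trans (Nat.succ_le_succ hW), hv⟩

end IsSplitQuadruple
end Span

section Pencils

variable {K σ : Type*} [Field K]

/-- Complete reducibility of a polynomial over any field and in any variables. Constants are
absorbed into the linear forms, so `1` is the only constant with this property. -/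
def IsProductOfLinearForms (P : MvPolynomial σ K) : Prop :=
  ∃ s : Multiset (MvPolynomial σ K), (∀ α ∈ s, α ≠ 0 ∧ α.IsHomogeneous 1) ∧ P = s.prod

lemma exists_pair_coeff_ne_zero {c : Fin 4 → K × K}
    (hc : ∀ i j, i ≠ j → (c i).1 * (c j).2 ≠ (c i).2 * (c j).1) :
    ∃ i j, i ≠ j ∧ ((c i).1 ≠ 0 ∧ (c i).2 ≠ 0) ∧ (c j).1 ≠ 0 ∧ (c j).2 ≠ 0 := by
  classical
  let S : Finset (Fin 4) := {i | (c i).1 = 0}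
  let T : Finset (Fin 4) := {i | (c i).2 = 0}
  have hS : S.card ≤ 1 := Finset.card_le_one.2 fun i hi j hj => by
    by_contra hij
    exact hc i j hij (by rw [(Finset.mem_filter.1 hi).2, (Finset.mem_filter.1 hj).2]; ring)
  have hT : T.card ≤ 1 := Finset.card_le_one.2 fun i hi j hj => by
    by_contra hij
    exact hc i j hij (by rw [(Finset.mem_filter.1 hi).2, (Finset.mem_filter.1 hj).2]; ring)
  have hST : 1 < (S ∪ T)ᶜ.card := by
    rw [Finset.card_compl, Fintype.card_fin]
    have := Finset.card_union_le S T
    omega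
  obtain ⟨i, hi, j, hj, hij⟩ := Finset.one_lt_card.1 hST
  simp only [S, T, Finset.mem_compl, Finset.mem_union, Finset.mem_filter, Finset.mem_univ,
    true_and, not_or] at hi hj
  exact ⟨i, j, hij, hi, hj⟩

variable [Fintype σ]

lemma mem_of_linForm_dvd_prod_linForm [Infinite K] {ι : Type*} [Fintype ι] {a : ι → σ → K}
    (ha : ∀ i, a i ≠ 0) {c : σ → K} (h : linForm c ∣ ∏ i, linForm (a i))
    {U : Submodule K (σ → K)} (hU : ∀ i, a i ∈ U) : c ∈ U := by
  obtain ⟨x, hx_mem, hx_notMem⟩ :=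
    exists_forall_dotProduct_eq_zero_and_ne_zero (Submodule.span K {c}) a
  obtain ⟨i, -, hi⟩ : ∃ i ∈ Finset.univ, a i ⬝ᵥ x = 0 := by
    have hdvd := map_dvd (eval x) h
    simp only [map_prod, eval_linForm, hx_mem c (Submodule.mem_span_singleton_self c),
      zero_dvd_iff] at hdvd
    exact Finset.prod_eq_zero_iff.1 hdvd
  obtain ⟨t, ht⟩ := Submodule.mem_span_singleton.1 (not_imp_not.1 (hx_notMem i) hi)
  have ht0 : t ≠ 0 := by
    rintro rfl
    exact ha i (by rw [← ht, zero_smul])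
  exact (U.smul_mem_iff ht0).1 (ht ▸ hU i)

lemma IsProductOfLinearForms.exists_eq_prod_linForm {P : MvPolynomial σ K}
    (h : IsProductOfLinearForms P) {d : ℕ} (hP : P.IsHomogeneous d) :
    ∃ a : Fin d → σ → K, (∀ i, a i ≠ 0) ∧ P = ∏ i, linForm (a i) := by
  obtain ⟨s, hs, rfl⟩ := h
  obtain ⟨l, rfl⟩ := Quot.exists_rep s
  choose a ha using fun i : Fin l.length => exists_eq_linForm (hs _ (List.get_mem l i)).2
  have ha0 (i : Fin l.length) : a i ≠ 0 := fun h0 =>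
    (hs _ (List.get_mem l i)).1 (by rw [ha, h0, map_zero])
  have hprod : (Multiset.prod (l : Multiset (MvPolynomial σ K))) = ∏ i, linForm (a i) := by
    rw [Multiset.prod_coe, ← Fin.prod_univ_getElem]
    exact Finset.prod_congr rfl fun i _ => ha i
  obtain rfl : d = l.length := by
    refine (hP.inj_right ?_ ?_).trans (Fintype.card_fin _)
    · exact hprod ▸ isHomogeneous_prod_linForm a
    · exact hprod.trans_ne (Finset.prod_ne_zero_iff.2 fun i _ => linForm_ne_zero (ha0 i))
  exact ⟨a, ha0, hprod⟩

lemma exists_isSplitQuadruple {F G : MvPolynomial σ K} {d : ℕ} (hF : F.IsHomogeneous d)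
    (hG : G.IsHomogeneous d) (hFprod : IsProductOfLinearForms F)
    (hGprod : IsProductOfLinearForms G) (hcop : IsRelPrime F G) {c : Fin 4 → K × K}
    (hc : ∀ i j, i ≠ j → (c i).1 * (c j).2 ≠ (c i).2 * (c j).1)
    (hprod : ∀ i, IsProductOfLinearForms (C (c i).1 * F + C (c i).2 * G)) :
    ∃ (a : Fin 4 → Fin d → σ → K) (r s r' s' : K), IsSplitQuadruple a r s r' s' ∧
      F = ∏ i, linForm (a 0 i) ∧ G = ∏ i, linForm (a 1 i) := by
  obtain ⟨i, j, hij, hi, hj⟩ := exists_pair_coeff_ne_zero hc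
  have hom (k : Fin 4) : (C (c k).1 * F + C (c k).2 * G).IsHomogeneous d :=
    (hF.C_mul _).add (hG.C_mul _)
  obtain ⟨a₀, ne₀, rfl⟩ := hFprod.exists_eq_prod_linForm hF
  obtain ⟨a₁, ne₁, rfl⟩ := hGprod.exists_eq_prod_linForm hG
  obtain ⟨a₂, ne₂, eq₂⟩ := (hprod i).exists_eq_prod_linForm (hom i)
  obtain ⟨a₃, ne₃, eq₃⟩ := (hprod j).exists_eq_prod_linForm (hom j)
  refine ⟨![a₀, a₁, a₂, a₃], (c i).1, (c i).2, (c j).1, (c j).2, ?_, rfl, rfl⟩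
  exact
    { ne_zero := by simpa [Fin.forall_fin_succ] using ⟨ne₀, ne₁, ne₂, ne₃⟩
      isRelPrime := hcop
      prod_two := eq₂.symm
      prod_three := eq₃.symm
      coeff_two_ne_zero := hi
      coeff_three_ne_zero := hj
      coeff_det_ne_zero := fun h => hc i j hij (by linear_combination h) }

end Pencils

end PencilOfForms

open PencilOfForms in
theorem pencil_more_than_three_completely_reducible_fibers_general
    {K σ : Type*} [Field K] [CharZero K] [Finite σ] {F G : MvPolynomial σ K} {d : ℕ}
    (hF : F.IsHomogeneous d) (hG : G.IsHomogeneous d)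
    (hFprod : IsProductOfLinearForms F) (hGprod : IsProductOfLinearForms G)
    (hcop : IsRelPrime F G) {c : Fin 4 → K × K}
    (hc : ∀ i j, i ≠ j → (c i).1 * (c j).2 ≠ (c i).2 * (c j).1)
    (hprod : ∀ i, IsProductOfLinearForms (C (c i).1 * F + C (c i).2 * G)) :
    Module.rank K ↥(Submodule.span K
      {α : MvPolynomial σ K | (α ≠ 0 ∧ α.IsHomogeneous 1) ∧ (α ∣ F ∨ α ∣ G)}) ≤ 3 := by
  have := Fintype.ofFinite σ
  obtain ⟨a, r, s, r', s', ha, rfl, rfl⟩ :=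
    exists_isSplitQuadruple hF hG hFprod hGprod hcop hc hprod
  obtain ⟨U, hU, hmem⟩ := ha.exists_submodule_finrank_le_three
  have hle : Submodule.span K {α : MvPolynomial σ K | (α ≠ 0 ∧ α.IsHomogeneous 1) ∧
      (α ∣ ∏ i, linForm (a 0 i) ∨ α ∣ ∏ i, linForm (a 1 i))} ≤ U.map linForm := by
    refine Submodule.span_le.2 ?_
    rintro α ⟨⟨-, hα⟩, hdvd⟩
    obtain ⟨b, rfl⟩ := exists_eq_linForm hα
    refine Submodule.mem_map_of_mem (hdvd.elim (fun h => ?_) fun h => ?_)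
    · exact mem_of_linForm_dvd_prod_linForm (ha.ne_zero 0) h fun i => (hmem i).1
    · exact mem_of_linForm_dvd_prod_linForm (ha.ne_zero 1) h fun i => (hmem i).2
  refine (Submodule.rank_mono hle).trans ((rank_map_le _ _).trans ?_)
  rw [← Module.finrank_eq_rank]
  exact_mod_cast hU

/-- If a pencil on ℙⁿ with irreducible generic fiber has more than 3 pairwise distinct
completely reducible members, then the linear factors of F and G span a subspace of
dimension at most 3 (the pencil is a linear pull-back of a pencil on ℙ²). -/
theorem pencil_more_than_three_completely_reducible_fibers
    (n d : ℕ) (hn : 1 ≤ n) (hd : 1 ≤ d)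
    (F G : MvPolynomial (Fin (n + 1)) ℂ)
    (hF : F.IsHomogeneous d) (hG : G.IsHomogeneous d)
    (hFcr : CompletelyReducible n F) (hGcr : CompletelyReducible n G)
    (hcop : RelPrime n F G)
    (hgen : GenericFiberIrreducible n F G)
    (c : Fin 4 → ℂ × ℂ)
    (hprop : ∀ i j, i ≠ j → (c i).1 * (c j).2 ≠ (c i).2 * (c j).1)
    (hcr : ∀ i, CompletelyReducible n (C (c i).1 * F + C (c i).2 * G)) :
    Module.rank ℂ
      ↥(Submodule.span ℂ
        {α : MvPolynomial (Fin (n + 1)) ℂ | IsLinearForm n α ∧ (α ∣ F ∨ α ∣ G)}) ≤ 3 :=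
  pencil_more_than_three_completely_reducible_fibers_general hF hG hFcr hGcr
    (fun p => hcop p) hprop hcr
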